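/- Let E be a real inner product space and let n be a positive integer. Let Φ : E → (Fin n → ℝ) be a map whose output always has all coordinates in [0,1]. Let f, g : (Fin n → ℝ) → ℝ both be entry-wise concave on the unit cube, with f(X) ≥ 0 for every binary vector X ∈ {0,1}ⁿ, and with g(X) = 0 or g(X) ≥ 1 for every binary vector X ∈ {0,1}ⁿ. Let β > 0 and define the loss ℓ : E → ℝ by ℓ(θ) = f(Φ(θ)) + β·g(Φ(θ)). Fix θ ∈ E, let L > 0, and suppose ℓ is differentiable with base-point L-Lipschitz gradient on the closed ball of radius ‖∇ℓ(θ)‖/L around θ. Let ε satisfy 0 ≤ ε < ‖∇ℓ(θ)‖/L and set Δ = ‖∇ℓ(θ)‖·ε − (L/2)·ε². If ℓ(θ) < β + Δ, then there exists a binary vector X ∈ {0,1}ⁿ with g(X) = 0 and f(X) ≤ ℓ(θ) − Δ. -/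

import Mathlib

/-- `F` is entry-wise concave on the unit cube: for every index `i` and every point `x`
with all coordinates in `[0,1]`, the map `t ↦ F (Function.update x i t)` is concave
on `[0,1]`. -/
def EntrywiseConcave (n : ℕ) (F : (Fin n → ℝ) → ℝ) : Prop :=
  ∀ (i : Fin n) (x : Fin n → ℝ), (∀ j, x j ∈ Set.Icc (0 : ℝ) 1) →
    ConcaveOn ℝ (Set.Icc (0 : ℝ) 1) (fun t => F (Function.update x i t))

/-!
A coordinate of a point of the cube can be moved to `0` or `1` without increasing an entry-wise
concave function, so such a function attains its minimum over the cube at a binary vector `X`.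
Applied to `f + β * g`, this bounds the loss below by `f X + β * g X` everywhere, hence on the ball
of radius `ε`. There the descent lemma bounds the loss above by its first-order model plus
`L / 2 * ε ^ 2`, and the infimum of the model over the ball is `ℓ θ - ‖ℓ' θ‖ * ε`. It is only an
infimum in a general normed space, but since `X` does not depend on the point of the ball, no
steepest descent direction has to exist. Thus `f X + β * g X ≤ ℓ θ - Δ < β`, and the gap in the
values of `g` forces `g X = 0`.
-/

open Metric Set

/-- `X` is a binary vector, `X ∈ {0,1}^ι`, its entries being regarded as real numbers. -/
def IsBinary {ι : Type*} (X : ι → ℝ) : Prop :=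
  ∀ i, X i = 0 ∨ X i = 1

theorem finite_setOf_isBinary (ι : Type*) [Finite ι] : {X : ι → ℝ | IsBinary X}.Finite :=
  Finite.pi' fun _ => toFinite {0, 1}

namespace EntrywiseConcave

variable {n : ℕ} {F G : (Fin n → ℝ) → ℝ} {x : Fin n → ℝ}

theorem add (hF : EntrywiseConcave n F) (hG : EntrywiseConcave n G) :
    EntrywiseConcave n (fun x => F x + G x) :=
  fun i x hx => (hF i x hx).add (hG i x hx)

theorem const_mul {c : ℝ} (hF : EntrywiseConcave n F) (hc : 0 ≤ c) :
    EntrywiseConcave n (fun x => c * F x) :=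
  fun i x hx => (hF i x hx).smul hc

theorem exists_update_le (hF : EntrywiseConcave n F) (hx : ∀ j, x j ∈ Icc (0 : ℝ) 1)
    (i : Fin n) : ∃ b : ℝ, (b = 0 ∨ b = 1) ∧ F (Function.update x i b) ≤ F x := by
  have hmin : min (F (Function.update x i 0)) (F (Function.update x i 1)) ≤ F x := by
    simpa only [Function.update_eq_self] using
      (hF i x hx).min_le_of_mem_Icc (left_mem_Icc.2 zero_le_one) (right_mem_Icc.2 zero_le_one)
        (hx i)
  rcases min_le_iff.1 hmin with h | h
  · exact ⟨0, Or.inl rfl, h⟩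
  · exact ⟨1, Or.inr rfl, h⟩

theorem exists_binary_on_le (hF : EntrywiseConcave n F) (hx : ∀ j, x j ∈ Icc (0 : ℝ) 1)
    (s : Finset (Fin n)) :
    ∃ y : Fin n → ℝ, (∀ j, y j ∈ Icc (0 : ℝ) 1) ∧ (∀ i ∈ s, y i = 0 ∨ y i = 1) ∧ F y ≤ F x := by
  induction s using Finset.induction_on with
  | empty => exact ⟨x, hx, by simp, le_rfl⟩
  | insert a s _ ih =>
    obtain ⟨y, hy, hys, hyx⟩ := ih
    obtain ⟨b, hb, hle⟩ := hF.exists_update_le hy a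
    have hb_mem : b ∈ Icc (0 : ℝ) 1 := by rcases hb with rfl | rfl <;> simp
    refine ⟨Function.update y a b, fun j => ?_, fun j hj => ?_, hle.trans hyx⟩
    · rcases eq_or_ne j a with rfl | hja
      · simpa using hb_mem
      · simpa [hja] using hy j
    · rcases eq_or_ne j a with rfl | hja
      · simpa using hb
      · simpa [hja] using hys j (Finset.mem_of_mem_insert_of_ne hj hja)

theorem exists_isBinary_le (hF : EntrywiseConcave n F) (hx : ∀ j, x j ∈ Icc (0 : ℝ) 1) :
    ∃ X, IsBinary X ∧ F X ≤ F x := by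
  obtain ⟨X, -, hX, hle⟩ := hF.exists_binary_on_le hx Finset.univ
  exact ⟨X, fun i => hX i (Finset.mem_univ i), hle⟩

theorem exists_isBinary_forall_le (hF : EntrywiseConcave n F) :
    ∃ X, IsBinary X ∧ ∀ x : Fin n → ℝ, (∀ j, x j ∈ Icc (0 : ℝ) 1) → F X ≤ F x := by
  obtain ⟨X, hX, hmin⟩ :=
    exists_min_image {X | IsBinary X} F (finite_setOf_isBinary (Fin n)) ⟨0, fun _ => Or.inl rfl⟩
  refine ⟨X, hX, fun x hx => ?_⟩
  obtain ⟨Y, hY, hYx⟩ := hF.exists_isBinary_le hx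
  exact (hmin Y hY).trans hYx

end EntrywiseConcave

section Descent

variable {E F : Type*} [NormedAddCommGroup E] [NormedSpace ℝ E] [NormedAddCommGroup F]
  [NormedSpace ℝ F]

theorem norm_image_sub_sub_smul_le_of_norm_hasDerivWithinAt_sub_le {f f' : ℝ → F} {d : F}
    {a b C : ℝ} (hab : a ≤ b) (hf : ∀ t ∈ Icc a b, HasDerivWithinAt f (f' t) (Icc a b) t)
    (hf' : ∀ t ∈ Ico a b, ‖f' t - d‖ ≤ C * (t - a)) :
    ‖f b - f a - (b - a) • d‖ ≤ C / 2 * (b - a) ^ 2 := by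
  let r : ℝ → F := fun t => f t - f a - (t - a) • d
  have hr_deriv : ∀ t ∈ Icc a b, HasDerivWithinAt r (f' t - d) (Icc a b) t := fun t ht => by
    have hlin : HasDerivWithinAt (fun t => (t - a) • d) d (Icc a b) t := by
      simpa using ((hasDerivWithinAt_id t _).sub_const a).smul_const d
    exact ((hf t ht).sub_const (f a)).fun_sub hlin
  have hbound_deriv (t : ℝ) : HasDerivAt (fun t => C / 2 * (t - a) ^ 2) (C * (t - a)) t := by
    refine ((((hasDerivAt_id' t).sub_const a).fun_pow 2).const_mul (C / 2)).congr_deriv ?_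
    push_cast
    ring
  exact image_norm_le_of_norm_deriv_right_le_deriv_boundary
    (fun t ht => (hr_deriv t ht).continuousWithinAt)
    (fun t ht => (hr_deriv t (Ico_subset_Icc_self ht)).mono_of_mem_nhdsWithin
      (Icc_mem_nhdsGE_of_mem ht))
    (by simp [r]) hbound_deriv hf' (right_mem_Icc.2 hab)

theorem norm_image_sub_sub_le_of_norm_hasFDerivWithinAt_sub_le {f : E → F} {f' : E → E →L[ℝ] F}
    {s : Set E} {x y : E} {L : ℝ} (hs : StarConvex ℝ x s)
    (hf : ∀ z ∈ s, HasFDerivWithinAt f (f' z) s z)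
    (hf' : ∀ z ∈ s, ‖f' z - f' x‖ ≤ L * ‖z - x‖) (hy : y ∈ s) :
    ‖f y - f x - f' x (y - x)‖ ≤ L / 2 * ‖y - x‖ ^ 2 := by
  set v := y - x with hv
  let γ : ℝ → E := fun t => x + t • v
  have hγ_mem : MapsTo γ (Icc 0 1) s := fun t ht => hs.add_smul_sub_mem hy ht.1 ht.2
  have hγ_deriv (t : ℝ) : HasDerivAt γ v t := by
    simpa only [id_eq, one_smul] using ((hasDerivAt_id t).smul_const v).const_add x
  have hfγ_deriv : ∀ t ∈ Icc (0 : ℝ) 1, HasDerivWithinAt (f ∘ γ) (f' (γ t) v) (Icc 0 1) t :=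
    fun t ht => (hf _ (hγ_mem ht)).comp_hasDerivWithinAt t (hγ_deriv t).hasDerivWithinAt hγ_mem
  have hbound : ∀ t ∈ Ico (0 : ℝ) 1, ‖f' (γ t) v - f' x v‖ ≤ L * ‖v‖ ^ 2 * (t - 0) :=
      fun t ht => by
    have hγ_dist : ‖γ t - x‖ = t * ‖v‖ := by
      simp only [γ, add_sub_cancel_left, norm_smul, Real.norm_of_nonneg ht.1]
    calc ‖f' (γ t) v - f' x v‖ ≤ L * ‖γ t - x‖ * ‖v‖ :=
          (f' (γ t) - f' x).le_of_opNorm_le (hf' _ (hγ_mem (Ico_subset_Icc_self ht))) v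
      _ = L * ‖v‖ ^ 2 * (t - 0) := by rw [hγ_dist]; ring
  have hrem := norm_image_sub_sub_smul_le_of_norm_hasDerivWithinAt_sub_le zero_le_one
    hfγ_deriv hbound
  have hγ_zero : γ 0 = x := by simp [γ]
  have hγ_one : γ 1 = y := by simp [γ, hv]
  simp only [Function.comp_apply, hγ_zero, hγ_one, sub_zero, one_smul, one_pow, mul_one] at hrem
  linarith

theorem le_sub_of_forall_mem_closedBall_le {ℓ : E → ℝ} {ℓ' : E → E →L[ℝ] ℝ} {θ : E}
    {L ε c : ℝ} (hL : 0 ≤ L) (hε : 0 ≤ ε)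
    (hderiv : ∀ θ' ∈ closedBall θ ε, HasFDerivWithinAt ℓ (ℓ' θ') (closedBall θ ε) θ')
    (hlip : ∀ θ' ∈ closedBall θ ε, ‖ℓ' θ' - ℓ' θ‖ ≤ L * ‖θ' - θ‖)
    (hc : ∀ θ' ∈ closedBall θ ε, c ≤ ℓ θ') :
    c ≤ ℓ θ - (‖ℓ' θ‖ * ε - L / 2 * ε ^ 2) := by
  have hθ : θ ∈ closedBall θ ε := mem_closedBall_self hε
  have hmodel (v : E) (hv : ‖v‖ = 1) : c ≤ ℓ θ + ε * ℓ' θ v + L / 2 * ε ^ 2 := by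
    have hstep : ‖θ + ε • v - θ‖ = ε := by
      rw [add_sub_cancel_left, norm_smul, hv, mul_one, Real.norm_of_nonneg hε]
    have hmem : θ + ε • v ∈ closedBall θ ε := mem_closedBall_iff_norm.2 hstep.le
    have hrem := norm_image_sub_sub_le_of_norm_hasFDerivWithinAt_sub_le
      ((convex_closedBall θ ε).starConvex hθ) hderiv hlip hmem
    rw [hstep, add_sub_cancel_left, map_smul, smul_eq_mul] at hrem
    linarith [hc _ hmem, (abs_le.1 hrem).2]
  have hnorm : ‖ε • ℓ' θ‖ ≤ ℓ θ - c + L / 2 * ε ^ 2 := by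
    refine ContinuousLinearMap.opNorm_le_of_unit_norm ?_ fun v hv => abs_le.2 ⟨?_, ?_⟩
    · exact add_nonneg (sub_nonneg.2 (hc θ hθ)) (by positivity)
    · have hstep := hmodel v hv
      simp only [smul_apply, smul_eq_mul]
      linarith
    · have hstep := hmodel (-v) (by rwa [norm_neg])
      simp only [map_neg, mul_neg, smul_apply, smul_eq_mul] at hstep ⊢
      linarith
  rw [norm_smul, Real.norm_of_nonneg hε] at hnorm
  linarith

end Descent

theorem eq_zero_and_le_of_add_mul_le {a b β c : ℝ} (ha : 0 ≤ a) (hb : b = 0 ∨ 1 ≤ b)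
    (hβ : 0 ≤ β) (hle : a + β * b ≤ c) (hc : c < β) : b = 0 ∧ a ≤ c := by
  rcases hb with rfl | hb
  · exact ⟨rfl, by simpa using hle⟩
  · have hβb : β ≤ β * b := le_mul_of_one_le_right hβ hb
    linarith

theorem performance_guarantee_11_general {E : Type*} [NormedAddCommGroup E] [NormedSpace ℝ E]
    {n : ℕ} {Φ : E → Fin n → ℝ} {f g : (Fin n → ℝ) → ℝ} {β L ε : ℝ} {ℓ : E → ℝ}
    {ℓ' : E → E →L[ℝ] ℝ} {θ : E}
    (hΦ : ∀ θ' ∈ closedBall θ ε, ∀ i, Φ θ' i ∈ Icc (0 : ℝ) 1)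
    (hf : EntrywiseConcave n f) (hg : EntrywiseConcave n g)
    (hf0 : ∀ X, IsBinary X → 0 ≤ f X) (hg01 : ∀ X, IsBinary X → g X = 0 ∨ 1 ≤ g X)
    (hβ : 0 ≤ β) (hℓ : ∀ θ' ∈ closedBall θ ε, ℓ θ' = f (Φ θ') + β * g (Φ θ'))
    (hL : 0 ≤ L) (hε : 0 ≤ ε)
    (hderiv : ∀ θ' ∈ closedBall θ ε, HasFDerivWithinAt ℓ (ℓ' θ') (closedBall θ ε) θ')
    (hlip : ∀ θ' ∈ closedBall θ ε, ‖ℓ' θ' - ℓ' θ‖ ≤ L * ‖θ' - θ‖)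
    (hloss : ℓ θ < β + (‖ℓ' θ‖ * ε - L / 2 * ε ^ 2)) :
    ∃ X, IsBinary X ∧ g X = 0 ∧ f X ≤ ℓ θ - (‖ℓ' θ‖ * ε - L / 2 * ε ^ 2) := by
  obtain ⟨X, hX, hmin⟩ := (hf.add (hg.const_mul hβ)).exists_isBinary_forall_le
  have hball : ∀ θ' ∈ closedBall θ ε, f X + β * g X ≤ ℓ θ' := fun θ' hθ' =>
    (hmin _ (hΦ θ' hθ')).trans_eq (hℓ θ' hθ').symm
  have hle := le_sub_of_forall_mem_closedBall_le hL hε hderiv hlip hball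
  exact ⟨X, hX, eq_zero_and_le_of_add_mul_le (hf0 X hX) (hg01 X hX) hβ hle
    (sub_lt_iff_lt_add.2 hloss)⟩

theorem performance_guarantee_11
    {E : Type*} [NormedAddCommGroup E] [InnerProductSpace ℝ E] [CompleteSpace E]
    (n : ℕ) (hn : 0 < n) (Φ : E → Fin n → ℝ)
    (hΦ : ∀ (θ : E) (i : Fin n), Φ θ i ∈ Set.Icc (0 : ℝ) 1)
    (f g : (Fin n → ℝ) → ℝ)
    (hf : EntrywiseConcave n f) (hg : EntrywiseConcave n g)
    (hf0 : ∀ X : Fin n → ℝ, (∀ i, X i = 0 ∨ X i = 1) → 0 ≤ f X)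
    (hg01 : ∀ X : Fin n → ℝ, (∀ i, X i = 0 ∨ X i = 1) → g X = 0 ∨ 1 ≤ g X)
    (β : ℝ) (hβ : 0 < β)
    (ℓ : E → ℝ) (hℓ : ∀ θ, ℓ θ = f (Φ θ) + β * g (Φ θ))
    (θ : E) (L : ℝ) (hL : 0 < L)
    (hdiff : ∀ θ' : E, ‖θ' - θ‖ ≤ ‖gradient ℓ θ‖ / L → DifferentiableAt ℝ ℓ θ')
    (hlip : ∀ θ' : E, ‖θ' - θ‖ ≤ ‖gradient ℓ θ‖ / L →
      ‖gradient ℓ θ' - gradient ℓ θ‖ ≤ L * ‖θ' - θ‖)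
    (ε : ℝ) (hε0 : 0 ≤ ε) (hε1 : ε < ‖gradient ℓ θ‖ / L)
    (Δ : ℝ) (hΔ : Δ = ‖gradient ℓ θ‖ * ε - L / 2 * ε ^ 2)
    (hloss : ℓ θ < β + Δ) :
    ∃ X : Fin n → ℝ, (∀ i, X i = 0 ∨ X i = 1) ∧ g X = 0 ∧ f X ≤ ℓ θ - Δ := by
  have hball {θ' : E} (h : θ' ∈ closedBall θ ε) : ‖θ' - θ‖ ≤ ‖gradient ℓ θ‖ / L :=
    (mem_closedBall_iff_norm.1 h).trans hε1.le
  simpa only [hΔ, IsBinary, LinearIsometryEquiv.norm_map] using performance_guarantee_11_general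
    (fun θ' _ => hΦ θ') hf hg hf0 hg01 hβ.le (fun θ' _ => hℓ θ') hL.le hε0
    (ℓ' := fun θ' => InnerProductSpace.toDual ℝ E (gradient ℓ θ'))
    (fun θ' h => (hdiff θ' (hball h)).hasGradientAt.hasFDerivAt.hasFDerivWithinAt)
    (fun θ' h => by simpa only [← map_sub, LinearIsometryEquiv.norm_map] using hlip θ' (hball h))
    (by simpa only [hΔ, LinearIsometryEquiv.norm_map] using hloss)
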